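/- (Syndrome identity used in the soundness proof of Theorem 1.) Let F be a field, k a positive integer, n = 2k, G a k×n matrix over F whose left and right k×k blocks are circulant, and H an (n−k)×n matrix over F satisfying H·(x·G)^T = 0 for all x ∈ F^k (H is a parity-check matrix of the double circulant code generated by G). Let x ∈ F^k, e ∈ F^n, and y = x·G + e. Then for every a = (α_1,…,α_k) ∈ F^k, H·Γ_a(y)^T = H·Γ_a(e)^T. -/

import Mathlib

/-!
The code generated by a double circulant matrix `G` is invariant under `drot`: since the entries
of each block depend only on the difference of column and row index, rotating the codeword `x·G`
blockwise is the same as rotating the message `x` (`drot_vecMul`). Every rotation of a codeword is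
therefore annihilated by `H`, hence so is `Γ_a(x·G)`, and the identity follows from additivity
of `Γ_a`.
-/

/-- Left rotation of the vector `x ∈ F^k` by `i` positions:
`rot i (x_1, …, x_k) = (x_{i+1}, …, x_k, x_1, …, x_i)` (indices mod `k`). -/
def rot {F : Type*} {k : ℕ} (i : ℕ) (x : Fin k → F) : Fin k → F :=
  fun j => x ⟨(j.val + i) % k, Nat.mod_lt _ j.pos⟩

/-- Simultaneous (parallel) left rotation by `i` positions of the two halves of a
vector `y ∈ F^{2k}`: `drot i (y⁽¹⁾, y⁽²⁾) = (rot i y⁽¹⁾, rot i y⁽²⁾)`. -/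
def drot {F : Type*} {k : ℕ} (i : ℕ) (y : Fin (2 * k) → F) : Fin (2 * k) → F :=
  fun j =>
    if h : j.val < k then
      y ⟨(j.val + i) % k,
        lt_of_lt_of_le (Nat.mod_lt _ (lt_of_le_of_lt (Nat.zero_le _) h)) (by omega)⟩
    else
      y ⟨k + (j.val - k + i) % k, by
        have h2 := j.isLt
        have hk : 0 < k := by omega
        have := Nat.mod_lt (j.val - k + i) hk
        omega⟩

/-- `Γ_a(y) = Σ_{i=1}^{k} α_i · drot_i(y)` (with `i : Fin k` 0-indexed, so the
rotation amount is `i.val + 1`). -/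
def Gamma {F : Type*} [Field F] {k : ℕ} (a : Fin k → F) (y : Fin (2 * k) → F) :
    Fin (2 * k) → F :=
  ∑ i : Fin k, a i • drot (i.val + 1) y

/-- `Γ'_a(x) = Σ_{i=1}^{k} α_i · rot_{k−i}(x)` (with `i : Fin k` 0-indexed, so the
rotation amount is `k - (i.val + 1)`). -/
def Gamma' {F : Type*} [Field F] {k : ℕ} (a : Fin k → F) (x : Fin k → F) :
    Fin k → F :=
  ∑ i : Fin k, a i • rot (k - (i.val + 1)) x

/-- A `k × k` matrix is circulant if its entry `(i, j)` depends only on `(j - i) mod k`. -/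
def IsCirculant {F : Type*} {k : ℕ} (A : Matrix (Fin k) (Fin k) F) : Prop :=
  ∃ c : Fin k → F, ∀ i j, A i j = c (j - i)

/-- Embedding of `Fin k` as the first block of `Fin (2 * k)`. -/
def finL {k : ℕ} (j : Fin k) : Fin (2 * k) := ⟨j.val, by have := j.isLt; omega⟩

/-- Embedding of `Fin k` as the second block of `Fin (2 * k)`. -/
def finR {k : ℕ} (j : Fin k) : Fin (2 * k) := ⟨k + j.val, by have := j.isLt; omega⟩

theorem drot_add {F : Type*} [Field F] {k : ℕ} (i : ℕ) (u v : Fin (2 * k) → F) :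
    drot i (u + v) = drot i u + drot i v := by
  funext j
  simp only [drot, Pi.add_apply]
  split <;> rfl

theorem Gamma_add {F : Type*} [Field F] {k : ℕ} (a : Fin k → F) (u v : Fin (2 * k) → F) :
    Gamma a (u + v) = Gamma a u + Gamma a v := by
  simp only [Gamma, drot_add, smul_add, Finset.sum_add_distrib]

/-- The rotated index, written with the cyclic addition of `Fin k`. -/
theorem rot_index {k : ℕ} [NeZero k] (j : Fin k) (i : ℕ) (h : (j.val + i) % k < k) :
    (⟨(j.val + i) % k, h⟩ : Fin k) = j + Fin.ofNat k i := by
  apply Fin.ext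
  simp [Fin.val_add]

/-- Reindexing of a cyclic convolution: shifting the output index by `s` amounts to shifting `x`. -/
theorem sum_shift {F : Type*} [Field F] {k : ℕ} [NeZero k] (x c : Fin k → F) (j s : Fin k) :
    ∑ m, x m * c (j + s - m) = ∑ m, x (m + s) * c (j - m) := by
  rw [← Equiv.sum_comp (Equiv.addRight s)]
  simp only [Equiv.coe_addRight, add_sub_add_right_eq_sub]

/-- Blockwise rotation of the codeword `x·G` is the codeword of the rotated message. -/
theorem drot_vecMul {F : Type*} [Field F] {k : ℕ} (hk : 0 < k)
    (G : Matrix (Fin k) (Fin (2 * k)) F)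
    (hL : IsCirculant (Matrix.of fun i j => G i (finL j)))
    (hR : IsCirculant (Matrix.of fun i j => G i (finR j)))
    (i : ℕ) (x : Fin k → F) :
    drot i (Matrix.vecMul x G) = Matrix.vecMul (rot i x) G := by
  have : NeZero k := ⟨hk.ne'⟩
  obtain ⟨c, hc⟩ := hL
  obtain ⟨d, hd⟩ := hR
  simp only [Matrix.of_apply] at hc hd
  funext j
  by_cases h : j.val < k
  · have hj : j = finL ⟨j.val, h⟩ := rfl
    have hs : drot i (Matrix.vecMul x G) j
        = Matrix.vecMul x G (finL ⟨(j.val + i) % k, Nat.mod_lt _ hk⟩) := by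
      simp only [drot, dif_pos h]; rfl
    rw [hs, hj]
    simp only [Matrix.vecMul, dotProduct, hc, rot, rot_index]
    have := rot_index (⟨j.val, h⟩ : Fin k) i (Nat.mod_lt _ hk)
    simp only at this
    simp only [finL, this]
    exact sum_shift x c _ _
  · have hlt : j.val - k < k := by omega
    have hj : j = finR ⟨j.val - k, hlt⟩ := by
      apply Fin.ext
      simp only [finR]
      omega
    have hs : drot i (Matrix.vecMul x G) j
        = Matrix.vecMul x G (finR ⟨(j.val - k + i) % k, Nat.mod_lt _ hk⟩) := by
      simp only [drot, dif_neg h]; rfl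
    have := rot_index (⟨j.val - k, hlt⟩ : Fin k) i (Nat.mod_lt _ hk)
    simp only at this
    rw [hs, this]
    conv_rhs => rw [hj]
    simp only [Matrix.vecMul, dotProduct, hd, rot, rot_index]
    exact sum_shift x d _ _

/-- Syndrome identity used in the soundness proof: if `G` is a `k × 2k` matrix
with circulant blocks, `H` an `(n−k) × n` (`n = 2k`) parity-check matrix of the
code generated by `G` (i.e. `H·(x·G)ᵀ = 0` for all `x`), and `y = x·G + e`,
then `H·Γ_a(y)ᵀ = H·Γ_a(e)ᵀ` for every `a ∈ F^k`. -/
theorem syndrome_Gamma {F : Type*} [Field F] {k : ℕ} (hk : 0 < k)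
    (G : Matrix (Fin k) (Fin (2 * k)) F)
    (hL : IsCirculant (Matrix.of fun i j => G i (finL j)))
    (hR : IsCirculant (Matrix.of fun i j => G i (finR j)))
    (H : Matrix (Fin (2 * k - k)) (Fin (2 * k)) F)
    (hH : ∀ x : Fin k → F, H.mulVec (Matrix.vecMul x G) = 0)
    (x : Fin k → F) (e : Fin (2 * k) → F)
    (y : Fin (2 * k) → F) (hy : y = Matrix.vecMul x G + e)
    (a : Fin k → F) :
    H.mulVec (Gamma a y) = H.mulVec (Gamma a e) := by
  have hzero : H.mulVec (Gamma a (Matrix.vecMul x G)) = 0 := by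
    simp only [Gamma, Matrix.mulVec_sum, Matrix.mulVec_smul, drot_vecMul hk G hL hR, hH,
      smul_zero, Finset.sum_const_zero]
  rw [hy, Gamma_add, Matrix.mulVec_add, hzero, zero_add]
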